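/- arXiv:2406.17593 — 3 statements merged into one kernel-verified Lean document; each statement's English description precedes it below -/
import Mathlib

section
/- Let m be a positive integer and let 2 ≤ t_1 < t_2 < ⋯ < t_m be integers such that ∑_{k=1}^m 1/(t_k − 1) > 1. Then there exist sets A_1, …, A_m ⊆ ℕ, at least one of which is infinite, such that ∑_{k=1}^m ∑_{n∈A_k} 1/(t_k^n − 1) is a rational number. -/
open scoped Classical

/-!
Kakeya's criterion: if the terms of a convergent positive series are listed in decreasing order and
none exceeds the sum of its successors, then every real in the range of the series is a subsum,
found greedily. For the terms `1 / (t_k ^ n - 1)`, put `σ = ∑ 1 / (t_k - 1)` and `X = t_k ^ n`.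
The powers of `t_j` exceeding `X` start at most at `t_j * X`, so they contribute at least
`1 / ((t_j - 1) * X)`, and all the terms smaller than `1 / (X - 1)` together at least `σ / X`.
When `σ > 1`, this is at least `1 / (X - 1)` as soon as `X ≥ σ / (σ - 1)`, so Kakeya's criterion
applies to the terms with such large `X`: every small positive real, rational or not, is a subsum.
-/

section Greedy

open Filter Topology

/-- The remainder after the greedy algorithm, aiming at the sum `q`, has decided on the first `n`
terms of `x`. A term is subtracted only if it is strictly smaller than the current remainder, so
that the remainder never vanishes and infinitely many terms get used. -/
noncomputable def greedyRem (x : ℕ → ℝ) (q : ℝ) : ℕ → ℝ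
  | 0 => q
  | n + 1 => if x n < greedyRem x q n then greedyRem x q n - x n else greedyRem x q n

/-- The set of indices of the terms of `x` selected by the greedy algorithm aiming at `q`. -/
def greedySet (x : ℕ → ℝ) (q : ℝ) : Set ℕ := {n | x n < greedyRem x q n}

variable {x : ℕ → ℝ} {q : ℝ}

theorem greedyRem_pos (hq : 0 < q) (n : ℕ) : 0 < greedyRem x q n := by
  induction n with
  | zero => exact hq
  | succ n ih =>
    rw [greedyRem]
    split_ifs with hlt
    · exact sub_pos.2 hlt
    · exact ih

theorem greedyRem_le_tsum_nat_add (hx : Summable x) (htail : ∀ n, x n ≤ ∑' k, x (k + (n + 1)))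
    (hqx : q ≤ ∑' n, x n) (n : ℕ) : greedyRem x q n ≤ ∑' k, x (k + n) := by
  induction n with
  | zero => exact hqx
  | succ n ih =>
    have hsplit : ∑' k, x (k + n) = x n + ∑' k, x (k + (n + 1)) := by
      rw [((summable_nat_add_iff n).2 hx).tsum_eq_zero_add, zero_add]
      simp only [add_assoc, add_comm 1 n]
    rw [greedyRem]
    split_ifs with hlt
    · linarith
    · exact (not_lt.1 hlt).trans (htail n)

theorem sum_range_indicator_greedySet (x : ℕ → ℝ) (q : ℝ) (n : ℕ) :
    ∑ i ∈ Finset.range n, (greedySet x q).indicator x i = q - greedyRem x q n := by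
  induction n with
  | zero => simp [greedyRem]
  | succ n ih =>
    rw [Finset.sum_range_succ, ih, greedyRem]
    by_cases hn : x n < greedyRem x q n
    · rw [if_pos hn, Set.indicator_of_mem (show n ∈ greedySet x q from hn)]
      ring
    · rw [if_neg hn, Set.indicator_of_notMem (show n ∉ greedySet x q from hn), add_zero]

theorem hasSum_indicator_greedySet (hx : Summable x) (htail : ∀ n, x n ≤ ∑' k, x (k + (n + 1)))
    (hq : 0 < q) (hqx : q ≤ ∑' n, x n) : HasSum ((greedySet x q).indicator x) q := by
  have hrem : Tendsto (greedyRem x q) atTop (𝓝 0) :=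
    squeeze_zero (fun n ↦ (greedyRem_pos hq n).le) (greedyRem_le_tsum_nat_add hx htail hqx)
      (tendsto_sum_nat_add x)
  rw [(hx.indicator _).hasSum_iff_tendsto_nat]
  simpa only [sum_range_indicator_greedySet, sub_zero] using hrem.const_sub q

theorem infinite_greedySet (hq : 0 < q) (hsum : HasSum ((greedySet x q).indicator x) q) :
    (greedySet x q).Infinite := by
  intro hfin
  obtain ⟨M, hM⟩ := hfin.bddAbove
  have hpartial : HasSum ((greedySet x q).indicator x) (q - greedyRem x q (M + 1)) := by
    rw [← sum_range_indicator_greedySet]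
    refine hasSum_sum_of_ne_finset_zero fun n hn ↦ Set.indicator_of_notMem (fun hmem ↦ hn ?_) x
    exact Finset.mem_range_succ_iff.2 (hM hmem)
  linarith [hsum.unique hpartial, greedyRem_pos (x := x) hq (M + 1)]

end Greedy

section Kakeya

variable {ι : Type*}

theorem exists_equiv_nat_antitone_comp {α : Type*} [LinearOrder α] [Infinite ι] {f : ι → α}
    (hf : ∀ i, {j | f i ≤ f j}.Finite) : ∃ u : ℕ ≃ ι, Antitone (f ∘ u) := by
  let : LinearOrder ι := linearOrderOfSTO WellOrderingRel
  -- Break ties between equal values of `f`, then rank each index by its number of predecessors.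
  let key (i : ι) : αᵒᵈ ×ₗ ι := toLex (OrderDual.toDual (f i), i)
  let rank (i : ι) : ℕ := {j | key j < key i}.ncard
  have hpred (i : ι) : {j | key j < key i}.Finite :=
    (hf i).subset fun j hj ↦ (Prod.Lex.lt_iff.1 hj).elim (fun h ↦ h.le) fun h ↦ h.1.le
  have hrank {i j : ι} (hij : key i < key j) : rank i < rank j := by
    refine Set.ncard_lt_ncard ⟨fun k hk ↦ lt_trans hk hij, fun hsub ↦ ?_⟩ (hpred j)
    exact lt_irrefl (key i) (hsub hij)
  have hinj : Function.Injective rank := by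
    intro i j hij
    rcases lt_trichotomy (key i) (key j) with h | h | h
    · exact absurd hij (hrank h).ne
    · exact congrArg (fun p ↦ (ofLex p).2) h
    · exact absurd hij (hrank h).ne'
  have : Infinite (Set.range rank) := (Set.infinite_range_of_injective hinj).to_subtype
  let enum := Nat.Subtype.orderIsoOfNat (Set.range rank)
  let u : ℕ ≃ ι := enum.toEquiv.trans (Equiv.ofInjective rank hinj).symm
  have hrank_u (n : ℕ) : rank (u n) = enum n := Equiv.apply_ofInjective_symm hinj _
  refine ⟨u, fun m n hmn ↦ ?_⟩
  by_contra! hlt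
  have hkey : key (u n) < key (u m) := Prod.Lex.lt_iff.2 (Or.inl hlt)
  have hle : (enum m : ℕ) ≤ enum n := enum.monotone hmn
  exact (hrank hkey).not_ge (by rwa [hrank_u, hrank_u])

variable {f : ι → ℝ}

theorem infinite_of_le_tsum_lt [Nonempty ι] (hpos : ∀ i, 0 < f i)
    (htail : ∀ i, f i ≤ ∑' j : {j | f j < f i}, f j) : Infinite ι := by
  by_contra hfin
  rw [not_infinite_iff_finite] at hfin
  obtain ⟨i, hmin⟩ := Finite.exists_min f
  have : IsEmpty {j | f j < f i} := ⟨fun j ↦ (hmin j).not_gt j.2⟩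
  exact (hpos i).not_ge ((htail i).trans_eq tsum_empty)

theorem le_tsum_nat_add_of_antitone_comp (hnonneg : ∀ i, 0 ≤ f i) (hf : Summable f)
    {u : ℕ ≃ ι} (hu : Antitone (f ∘ u)) {n : ℕ}
    (htail : f (u n) ≤ ∑' j : {j | f j < f (u n)}, f j) :
    f (u n) ≤ ∑' k, f (u (k + (n + 1))) := by
  have hinj : Function.Injective fun k ↦ u (k + (n + 1)) := u.injective.comp (add_left_injective _)
  have hsub : {j | f j < f (u n)} ⊆ Set.range fun k ↦ u (k + (n + 1)) := by
    intro j hj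
    have hlt : n < u.symm j := hu.reflect_lt (by simpa using hj)
    exact ⟨u.symm j - (n + 1), by simp [Nat.sub_add_cancel hlt]⟩
  calc f (u n) ≤ ∑' j : {j | f j < f (u n)}, f j := htail
    _ ≤ ∑' j : Set.range fun k ↦ u (k + (n + 1)), f j :=
      (hf.subtype _).tsum_le_tsum_of_inj (Set.inclusion hsub) (Set.inclusion_injective hsub)
        (fun j _ ↦ hnonneg j) (fun _ ↦ le_rfl) (hf.subtype _)
    _ = ∑' k, f (u (k + (n + 1))) := tsum_range f hinj

theorem exists_infinite_hasSum_of_le_tsum_lt (hpos : ∀ i, 0 < f i) (hf : Summable f)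
    (htail : ∀ i, f i ≤ ∑' j : {j | f j < f i}, f j) {q : ℝ} (hq : 0 < q) (hqf : q ≤ ∑' i, f i) :
    ∃ B : Set ι, B.Infinite ∧ HasSum (fun i : B ↦ f i) q := by
  have : Nonempty ι := by
    by_contra! hempty
    exact hq.not_ge (hqf.trans_eq tsum_empty)
  have := infinite_of_le_tsum_lt hpos htail
  obtain ⟨u, hu⟩ : ∃ u : ℕ ≃ ι, Antitone (f ∘ u) := exists_equiv_nat_antitone_comp fun i ↦ by
    simpa only [not_lt] using
      Filter.eventually_cofinite.1 (hf.tendsto_cofinite_zero.eventually_lt_const (hpos i))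
  have hsum : HasSum ((greedySet (f ∘ u) q).indicator (f ∘ u)) q :=
    hasSum_indicator_greedySet (u.summable_iff.2 hf)
      (fun n ↦ le_tsum_nat_add_of_antitone_comp (fun i ↦ (hpos i).le) hf hu (htail (u n))) hq
      (hqf.trans_eq (u.tsum_eq f).symm)
  refine ⟨u '' greedySet (f ∘ u) q, (infinite_greedySet hq hsum).image u.injective.injOn, ?_⟩
  exact (Equiv.Set.image u _ u.injective).hasSum_iff.1 (hasSum_subtype_iff_indicator.2 hsum)

end Kakeya

section Prod

variable {ι β : Type*}

theorem exists_infinite_preimage_prodMk [Finite ι] {s : Set (ι × β)}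
    (hs : s.Infinite) : ∃ k, (Prod.mk k ⁻¹' s).Infinite := by
  by_contra! hfin
  refine hs ((Set.finite_iUnion fun k ↦ (hfin k).image (Prod.mk k)).subset ?_)
  exact fun p hp ↦ Set.mem_iUnion.2 ⟨p.1, p.2, hp, rfl⟩

theorem tsum_subtype_eq_sum_tsum_preimage {E : Type*} [NormedAddCommGroup E] [CompleteSpace E]
    [Fintype ι] {f : ι × β → E} (hf : Summable f) (s : Set (ι × β)) :
    ∑' p : s, f p = ∑ k, ∑' b : Prod.mk k ⁻¹' s, f (k, b) := by
  rw [tsum_subtype, (hf.indicator s).tsum_prod, tsum_fintype]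
  refine Finset.sum_congr rfl fun k _ ↦ ?_
  rw [tsum_subtype (Prod.mk k ⁻¹' s) fun b ↦ f (k, b)]
  rfl

end Prod

section Lambert

theorem one_div_pow_succ_sub_one_le {t : ℝ} (ht : 1 < t) (n : ℕ) :
    1 / (t ^ (n + 1) - 1) ≤ (t - 1)⁻¹ * t⁻¹ ^ n := by
  have hpow : 1 ≤ t ^ n := one_le_pow₀ ht.le
  have : 0 < t - 1 := sub_pos.2 ht
  rw [inv_pow, ← mul_inv, ← one_div]
  exact one_div_le_one_div_of_le (by positivity) (by rw [pow_succ]; linarith)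

theorem one_div_pow_sub_one_nonneg {t : ℝ} (ht : 1 ≤ t) (n : ℕ) : 0 ≤ 1 / (t ^ n - 1) :=
  one_div_nonneg.2 (sub_nonneg.2 (one_le_pow₀ ht))

theorem summable_one_div_pow_sub_one {t : ℝ} (ht : 1 < t) :
    Summable fun n : ℕ ↦ 1 / (t ^ n - 1) := by
  have hgeom : Summable fun n : ℕ ↦ t⁻¹ ^ n :=
    summable_geometric_of_lt_one (by positivity) (inv_lt_one_of_one_lt₀ ht)
  rw [← summable_nat_add_iff 1]
  exact (hgeom.mul_left (t - 1)⁻¹).of_nonneg_of_le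
    (fun n ↦ one_div_pow_sub_one_nonneg ht.le (n + 1)) (one_div_pow_succ_sub_one_le ht)

theorem one_div_div_le_tsum_one_div_pow_sub_one {t X : ℝ} (ht : 1 < t) (hX : 1 ≤ X) :
    1 / (t - 1) / X ≤ ∑' n : {n : ℕ | X < t ^ n}, 1 / (t ^ (n : ℕ) - 1) := by
  obtain ⟨a, haX, hXa⟩ := exists_nat_pow_near hX ht
  have : 0 < t - 1 := sub_pos.2 ht
  have hlt (i : ℕ) : X < t ^ (a + 1 + i) :=
    hXa.trans_le (pow_le_pow_right₀ ht.le (Nat.le_add_right _ _))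
  have hgeom : HasSum (fun i : ℕ ↦ (t ^ (a + 1))⁻¹ * t⁻¹ ^ i) (1 / (t - 1) / t ^ a) := by
    convert! (hasSum_geometric_of_lt_one (by positivity) (inv_lt_one_of_one_lt₀ ht)).mul_left
      (t ^ (a + 1))⁻¹ using 1
    have : 1 - t⁻¹ = (t - 1) / t := by field_simp
    rw [this, pow_succ]
    field_simp
  calc 1 / (t - 1) / X ≤ 1 / (t - 1) / t ^ a := by gcongr
    _ ≤ ∑' n : {n : ℕ | X < t ^ n}, 1 / (t ^ (n : ℕ) - 1) := by
      refine hasSum_le_inj (fun i ↦ (⟨a + 1 + i, hlt i⟩ : {n : ℕ | X < t ^ n}))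
        (fun i j hij ↦ by simpa using hij) (fun n _ ↦ one_div_pow_sub_one_nonneg ht.le n)
        (fun i ↦ ?_) hgeom ((summable_one_div_pow_sub_one ht).subtype _).hasSum
      rw [inv_pow, ← mul_inv, ← pow_add, ← one_div]
      exact one_div_le_one_div_of_le (sub_pos.2 (hX.trans_lt (hlt i))) (sub_le_self _ zero_le_one)

/-- The terms `1 / (t_k ^ n - 1)` of the merged Lambert series with bases `t_k`, indexed by the
pairs `(k, n)`. The term at `n = 0` is `1 / 0 = 0`. -/
noncomputable def lambertTerm {ι : Type*} (t : ι → ℝ) (p : ι × ℕ) : ℝ := 1 / (t p.1 ^ p.2 - 1)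

variable {ι : Type*} {t : ι → ℝ}

theorem lambertTerm_lt_lambertTerm {p p' : ι × ℕ} (hp : 1 < t p.1 ^ p.2)
    (hlt : t p.1 ^ p.2 < t p'.1 ^ p'.2) : lambertTerm t p' < lambertTerm t p :=
  one_div_lt_one_div_of_lt (sub_pos.2 hp) (sub_lt_sub_right hlt 1)

theorem summable_lambertTerm [Finite ι] (ht : ∀ k, 1 < t k) : Summable (lambertTerm t) := by
  have hnonneg : 0 ≤ lambertTerm t := fun p ↦ one_div_pow_sub_one_nonneg (ht p.1).le p.2
  exact (summable_prod_of_nonneg hnonneg).2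
    ⟨fun k ↦ summable_one_div_pow_sub_one (t := t k) (ht k), .of_finite⟩

variable [Fintype ι]

theorem sum_div_le_tsum_lambertTerm (ht : ∀ k, 1 < t k) {X : ℝ} (hX : 1 ≤ X) :
    (∑ k, 1 / (t k - 1)) / X ≤ ∑' p : {p : ι × ℕ | X < t p.1 ^ p.2}, lambertTerm t p := by
  rw [tsum_subtype_eq_sum_tsum_preimage (summable_lambertTerm ht), Finset.sum_div]
  exact Finset.sum_le_sum fun k _ ↦ one_div_div_le_tsum_one_div_pow_sub_one (ht k) hX

theorem one_lt_of_div_sub_one_le {σ X : ℝ} (hσ : 1 < σ) (hX : σ / (σ - 1) ≤ X) : 1 < X :=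
  ((one_lt_div (sub_pos.2 hσ)).2 (sub_one_lt σ)).trans_le hX

theorem lambertTerm_le_tsum_lambertTerm_lt (ht : ∀ k, 1 < t k) (hbig : 1 < ∑ k, 1 / (t k - 1))
    {p : ι × ℕ} (hp : (∑ k, 1 / (t k - 1)) / (∑ k, 1 / (t k - 1) - 1) ≤ t p.1 ^ p.2) :
    lambertTerm t p ≤ ∑' p' : {p' : ι × ℕ | t p.1 ^ p.2 < t p'.1 ^ p'.2}, lambertTerm t p' := by
  set σ := ∑ k, 1 / (t k - 1)
  set X := t p.1 ^ p.2
  have hσ : 0 < σ - 1 := sub_pos.2 hbig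
  have hX : 1 < X := one_lt_of_div_sub_one_le hbig hp
  have hσX : σ ≤ X * (σ - 1) := (div_le_iff₀ hσ).1 hp
  calc lambertTerm t p = 1 / (X - 1) := rfl
    _ ≤ σ / X := by
      rw [div_le_div_iff₀ (sub_pos.2 hX) (by positivity)]
      linarith
    _ ≤ _ := sum_div_le_tsum_lambertTerm ht hX.le

theorem exists_infinite_tsum_lambertTerm_eq (ht : ∀ k, 1 < t k)
    (hbig : 1 < ∑ k, 1 / (t k - 1)) :
    ∃ δ > 0, ∀ x ∈ Set.Ioc 0 δ, ∃ B : Set (ι × ℕ),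
      B.Infinite ∧ (∀ p ∈ B, 1 ≤ p.2) ∧ ∑' p : B, lambertTerm t p = x := by
  set σ := ∑ k, 1 / (t k - 1)
  let P : Set (ι × ℕ) := {p | σ / (σ - 1) ≤ t p.1 ^ p.2}
  have one_lt_pow_of_mem {p : ι × ℕ} (hp : p ∈ P) : 1 < t p.1 ^ p.2 :=
    one_lt_of_div_sub_one_le hbig hp
  have mem_of_lt {p p' : ι × ℕ} (hp : p ∈ P) (hlt : t p.1 ^ p.2 < t p'.1 ^ p'.2) : p' ∈ P :=
    show σ / (σ - 1) ≤ t p'.1 ^ p'.2 from le_trans hp hlt.le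
  have hpos (p : P) : 0 < lambertTerm t p := one_div_pos.2 (sub_pos.2 (one_lt_pow_of_mem p.2))
  have hsum : Summable fun p : P ↦ lambertTerm t p := (summable_lambertTerm ht).subtype P
  have htail (p : P) : lambertTerm t p ≤
      ∑' p' : {p' : P | lambertTerm t p' < lambertTerm t p}, lambertTerm t p' := by
    let toSmaller (p' : {p' : ι × ℕ | t p.1.1 ^ p.1.2 < t p'.1 ^ p'.2}) :
        {p' : P | lambertTerm t p' < lambertTerm t p} :=
      ⟨⟨p', mem_of_lt p.2 p'.2⟩, lambertTerm_lt_lambertTerm (one_lt_pow_of_mem p.2) p'.2⟩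
    have hinj : Function.Injective toSmaller := fun p₁ p₂ h ↦
      Subtype.ext (congrArg (fun p' ↦ (p'.1 : ι × ℕ)) h)
    exact (lambertTerm_le_tsum_lambertTerm_lt ht hbig p.2).trans <|
      ((summable_lambertTerm ht).subtype _).tsum_le_tsum_of_inj toSmaller hinj
        (fun p' _ ↦ (hpos p').le) (fun _ ↦ le_rfl) (hsum.subtype _)
  obtain ⟨p₀⟩ : Nonempty P := by
    obtain ⟨k, -, -⟩ := Finset.exists_ne_zero_of_sum_ne_zero (zero_lt_one.trans hbig).ne'
    obtain ⟨n, hn⟩ := pow_unbounded_of_one_lt (σ / (σ - 1)) (ht k)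
    exact ⟨(k, n), hn.le⟩
  refine ⟨_, hsum.tsum_pos (fun p ↦ (hpos p).le) p₀ (hpos p₀), fun x hx ↦ ?_⟩
  obtain ⟨B, hB, hBx⟩ := exists_infinite_hasSum_of_le_tsum_lt hpos hsum htail hx.1 hx.2
  refine ⟨Subtype.val '' B, hB.image Subtype.val_injective.injOn, ?_, ?_⟩
  · rintro _ ⟨p, -, rfl⟩
    exact Nat.one_le_iff_ne_zero.2 fun h ↦ (one_lt_pow_of_mem p.2).ne' (by rw [h, pow_zero])
  · rw [tsum_image (lambertTerm t) Subtype.val_injective.injOn, hBx.tsum_eq]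

end Lambert

theorem stmt_5_general {ι : Type*} [Fintype ι] (t : ι → ℝ) (ht : ∀ k, 1 < t k)
    (hbig : 1 < ∑ k, 1 / (t k - 1)) :
    ∃ δ > 0, ∀ x ∈ Set.Ioc 0 δ, ∃ A : ι → Set ℕ,
      (∀ k, A k ⊆ {n | 1 ≤ n}) ∧ (∃ k, (A k).Infinite) ∧
      ∑ k, ∑' n : A k, 1 / (t k ^ (n : ℕ) - 1) = x := by
  obtain ⟨δ, hδ, hsub⟩ := exists_infinite_tsum_lambertTerm_eq ht hbig
  refine ⟨δ, hδ, fun x hx ↦ ?_⟩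
  obtain ⟨B, hB, hB_one_le, hBx⟩ := hsub x hx
  refine ⟨fun k ↦ Prod.mk k ⁻¹' B, fun k n hn ↦ hB_one_le _ hn,
    exists_infinite_preimage_prodMk hB, ?_⟩
  rw [← hBx, tsum_subtype_eq_sum_tsum_preimage (summable_lambertTerm ht)]
  rfl

/-- Merged Lambert subseries: if `2 ≤ t_1 < ⋯ < t_m` are integers with
`∑_k 1/(t_k - 1) > 1`, then there are sets `A_1, …, A_m` of positive integers,
at least one infinite, with `∑_k ∑_{n ∈ A_k} 1/(t_k^n - 1)` rational. -/
theorem stmt_5 (m : ℕ) (hm : 0 < m) (t : Fin m → ℕ)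
    (ht2 : ∀ k, 2 ≤ t k) (htmono : StrictMono t)
    (hbig : 1 < ∑ k : Fin m, (1 : ℝ) / (t k - 1)) :
    ∃ A : Fin m → Set ℕ,
      (∀ k, A k ⊆ {n | 1 ≤ n}) ∧ (∃ k, (A k).Infinite) ∧
      ∃ q : ℚ, (∑ k : Fin m, ∑' n : A k, (1 : ℝ) / ((t k) ^ (n : ℕ) - 1)) = q := by
  obtain ⟨δ, hδ, hsub⟩ :=
    stmt_5_general (fun k ↦ (t k : ℝ)) (fun k ↦ Nat.one_lt_cast.2 (ht2 k)) hbig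
  obtain ⟨q, hq_pos, hqδ⟩ := exists_rat_btwn hδ
  obtain ⟨A, hA, hA_inf, hsum⟩ := hsub q ⟨hq_pos, hqδ.le⟩
  exact ⟨A, hA, hA_inf, q, hsum⟩
end

section
/- For every positive integer d there exist a real β > 1 and a strictly increasing sequence of positive integers (a_k) such that lim_{k→∞} a_k^{1/β^k} = ∞ and ∑_{k=1}^∞ 1/(a_k + j) is a rational number for every j ∈ {0, 1, …, d−1}. -/
open Filter

/-!
The `d` sums `∑ 1 / (a_k + j)`, `j < d`, are rational combinations of the `d` sums
`∑ 1 / (a_k (a_k + 1) ⋯ (a_k + j))`, whose terms have the distinct orders `a_k ^ -(j + 1)`. The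
sequence is built in blocks of `d` integers `n_i = ⌊N x_i⌋` of a common size `N`. Such a block
contributes `N ^ -(j + 1) ∑ i, x_i ^ -(j + 1)` to the `j`-th sum, up to a rounding error
`O(N ^ -(j + 2))`. The power sums are open maps near a point with distinct coordinates (their
Jacobian is a Vandermonde matrix), so a block can correct, in all `d` sums simultaneously, any
errors of sizes at most `r N ^ -(j + 1)`. If the next block has size `N ^ q` then the rounding error
`O(N ^ -(j + 2))` is again correctable as long as `q (j + 1) < j + 2`, which holds for all `j < d`
when `q < (d + 1) / d`. Starting with any rational targets close to the expected sums, the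
correction process hits these targets. There are `d` terms per block, so `log a_k` grows like
`q ^ (k / d)`, which beats `β ^ k` as soon as `β ^ d < q`.
-/

namespace AhmesSeries

open Finset Real Topology

section PowerSums

variable {𝕜 : Type*} {d : ℕ}

/-- The first `d` power sums of `d` variables, as a self-map of `𝕜 ^ d`; the coordinate `j` carries
the exponent `j + 1`. -/
def powerSums [Semiring 𝕜] (u : Fin d → 𝕜) : Fin d → 𝕜 := fun j ↦ ∑ i, u i ^ ((j : ℕ) + 1)

variable [NontriviallyNormedField 𝕜]

/-- The derivative at `u` of the power sum map. -/
def powerSumsDeriv (u : Fin d → 𝕜) : (Fin d → 𝕜) →L[𝕜] (Fin d → 𝕜) :=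
  .pi fun j ↦ ∑ i, (((j : ℕ) + 1 : ℕ) * u i ^ (j : ℕ)) • .proj i

theorem hasStrictFDerivAt_powerSums (u : Fin d → 𝕜) :
    HasStrictFDerivAt powerSums (powerSumsDeriv u) u :=
  hasStrictFDerivAt_pi.2 fun j ↦ .fun_sum fun i _ ↦
    (hasStrictDerivAt_pow ((j : ℕ) + 1) (u i)).comp_hasStrictFDerivAt u
      (ContinuousLinearMap.proj (R := 𝕜) (φ := fun _ ↦ 𝕜) i).hasStrictFDerivAt

theorem powerSumsDeriv_surjective [CharZero 𝕜] {u : Fin d → 𝕜} (hu : Function.Injective u) :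
    Function.Surjective (powerSumsDeriv u) := by
  have hdet : IsUnit (Matrix.vandermonde u) := by
    rw [Matrix.isUnit_iff_isUnit_det, isUnit_iff_ne_zero]
    exact Matrix.det_vandermonde_ne_zero_iff.2 hu
  intro y
  obtain ⟨v, hv⟩ := Matrix.vecMul_surjective_iff_isUnit.2 hdet
    fun j : Fin d ↦ y j / ((j : ℕ) + 1 : ℕ)
  refine ⟨v, funext fun j ↦ ?_⟩
  have hvj : (∑ i, v i * u i ^ (j : ℕ)) * ((j : ℕ) + 1 : ℕ) = y j :=
    (eq_div_iff (Nat.cast_ne_zero.2 (Nat.succ_ne_zero _))).1 (congrFun hv j)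
  rw [← hvj, Finset.sum_mul]
  simp only [powerSumsDeriv, ContinuousLinearMap.coe_pi', _root_.sum_apply, _root_.smul_apply,
    ContinuousLinearMap.proj_apply, smul_eq_mul]
  exact Finset.sum_congr rfl fun i _ ↦ by ring

theorem map_powerSums_nhds [CompleteSpace 𝕜] [CharZero 𝕜] {u : Fin d → 𝕜}
    (hu : Function.Injective u) : map powerSums (𝓝 u) = 𝓝 (powerSums u) :=
  (hasStrictFDerivAt_powerSums u).map_nhds_eq_of_surj
    (LinearMap.range_eq_top.2 (powerSumsDeriv_surjective hu))

theorem eventually_exists_powerSums_inv_eq [CompleteSpace 𝕜] [CharZero 𝕜] {x₀ : Fin d → 𝕜}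
    (hinj : Function.Injective x₀) (h0 : ∀ i, x₀ i ≠ 0) {s : Set (Fin d → 𝕜)} (hs : s ∈ 𝓝 x₀) :
    ∀ᶠ y in 𝓝 (powerSums x₀⁻¹), ∃ x ∈ s, powerSums x⁻¹ = y := by
  have hcont : ContinuousAt (fun u : Fin d → 𝕜 ↦ u⁻¹) x₀⁻¹ :=
    continuousAt_pi.2 fun i ↦ (continuousAt_apply i x₀⁻¹).inv₀ (inv_ne_zero (h0 i))
  rw [← map_powerSums_nhds (u := x₀⁻¹) (inv_injective.comp hinj), eventually_map]
  filter_upwards [hcont.preimage_mem_nhds ((inv_inv x₀).symm ▸ hs)] with u hu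
  exact ⟨u⁻¹, hu, by rw [inv_inv]⟩

end PowerSums

section RisingFactorials

theorem one_div_add_eq_sum_add_remainder {K : Type*} [Field K] [CharZero K] {n : ℕ} (hn : 0 < n)
    {j m : ℕ} (hm : m ≤ j + 1) :
    1 / ((n : K) + j) =
      ∑ i ∈ range m, (-1 : K) ^ i * j.descFactorial i * (1 / n.ascFactorial (i + 1)) +
        (-1) ^ m * j.descFactorial m / (n.ascFactorial m * (n + j)) := by
  induction m with
  | zero => simp
  | succ m ih =>
    have hasc : (n.ascFactorial m : K) ≠ 0 :=
      mod_cast ((pow_pos hn m).trans_le (Nat.pow_succ_le_ascFactorial n m)).ne'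
    have hnm : (n : K) + m ≠ 0 := mod_cast (show n + m ≠ 0 by omega)
    have hnj : (n : K) + j ≠ 0 := mod_cast (show n + j ≠ 0 by omega)
    rw [ih (by omega), Finset.sum_range_succ, Nat.ascFactorial_succ, Nat.descFactorial_succ]
    push_cast [Nat.cast_sub (show m ≤ j by omega)]
    field_simp
    ring

theorem one_div_add_eq_sum_one_div_ascFactorial {K : Type*} [Field K] [CharZero K] {n : ℕ}
    (hn : 0 < n) (j : ℕ) :
    1 / ((n : K) + j) =
      ∑ i ∈ range (j + 1), (-1 : K) ^ i * j.descFactorial i * (1 / n.ascFactorial (i + 1)) := by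
  simpa using one_div_add_eq_sum_add_remainder (K := K) hn (le_refl (j + 1))

theorem exists_rat_hasSum_one_div_add {ι : Type*} {a : ι → ℕ} (ha : ∀ k, 0 < a k) {j : ℕ}
    (h : ∀ i ≤ j, ∃ T : ℚ, HasSum (fun k ↦ (1 : ℝ) / (a k).ascFactorial (i + 1)) T) :
    ∃ T : ℚ, HasSum (fun k ↦ (1 : ℝ) / (a k + j)) T := by
  choose! T hT using h
  refine ⟨∑ i ∈ range (j + 1), (-1) ^ i * j.descFactorial i * T i, ?_⟩
  simp only [one_div_add_eq_sum_one_div_ascFactorial (ha _)]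
  push_cast
  exact hasSum_sum fun i hi ↦ (hT i (Finset.mem_range_succ_iff.1 hi)).mul_left _

theorem one_div_pow_sub_one_div_add_pow_le {x t : ℝ} (hx : 0 < x) (ht : 0 ≤ t) (k : ℕ) :
    1 / x ^ k - 1 / (x + t) ^ k ≤ k * t / x ^ (k + 1) := by
  have hratio : 1 - k * (t / x) ≤ (x / (x + t)) ^ k := calc
    1 - k * (t / x) ≤ 1 + k * (-(t / (x + t))) := by
      rw [mul_neg, ← sub_eq_add_neg]
      gcongr
      linarith
    _ ≤ (1 + -(t / (x + t))) ^ k := by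
      refine one_add_mul_le_pow ?_ k
      have : t / (x + t) ≤ 1 := (div_le_one (by positivity)).2 (by linarith)
      linarith
    _ = (x / (x + t)) ^ k := by
      congr 1
      field_simp
      ring
  calc 1 / x ^ k - 1 / (x + t) ^ k = (1 - (x / (x + t)) ^ k) / x ^ k := by
        rw [div_pow]
        field_simp
    _ ≤ k * (t / x) / x ^ k := by
        gcongr
        linarith
    _ = k * t / x ^ (k + 1) := by
        field_simp
        ring

theorem abs_one_div_ascFactorial_sub_one_div_pow_le {n k : ℕ} (hn : 0 < n) {y : ℝ}
    (hy : y ∈ Set.Icc (n : ℝ) (n + k)) :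
    |1 / (n.ascFactorial k : ℝ) - 1 / y ^ k| ≤ k ^ 2 / n ^ (k + 1) := by
  have hn' : (0 : ℝ) < n := mod_cast hn
  have hlow : (n : ℝ) ^ k ≤ n.ascFactorial k := mod_cast Nat.pow_succ_le_ascFactorial n k
  have hupp : (n.ascFactorial k : ℝ) ≤ (n + k) ^ k :=
    mod_cast (Nat.ascFactorial_le k n.le_succ).trans (Nat.ascFactorial_le_pow_add n k)
  have hy0 : 0 < y := hn'.trans_le hy.1
  have hasc0 : (0 : ℝ) < n.ascFactorial k := (pow_pos hn' k).trans_le hlow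
  calc |1 / (n.ascFactorial k : ℝ) - 1 / y ^ k| ≤ 1 / (n : ℝ) ^ k - 1 / (n + k : ℝ) ^ k := by
        refine Real.dist_le_of_mem_Icc ⟨?_, ?_⟩ ⟨?_, ?_⟩ <;> gcongr
        exacts [hy.2, hy.1]
    _ ≤ k * k / n ^ (k + 1) := one_div_pow_sub_one_div_add_pow_le hn' k.cast_nonneg k
    _ = k ^ 2 / n ^ (k + 1) := by rw [sq]

end RisingFactorials

section Correction

/-- The greedy correction principle: `E m` is a set of deviations from the expected remaining sum
`∑ l ≥ m, c l` that the terms of index `≥ m` are able to correct. -/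
theorem exists_tendsto_sum_range_of_correction {V ι : Type*} [AddCommGroup V] [TopologicalSpace V]
    [IsTopologicalAddGroup V] {φ : ι → V} {S : ℕ → Set ι} {E : ℕ → Set V} {c : ℕ → V} {σ s : V}
    (hE : Tendsto E atTop (𝓝 0).smallSets)
    (hstep : ∀ m, ∀ e ∈ E m, ∃ n ∈ S m, c m + e - φ n ∈ E (m + 1))
    (hc : Tendsto (fun m ↦ ∑ l ∈ range m, c l) atTop (𝓝 σ)) (hs : s - σ ∈ E 0) :
    ∃ ν : ℕ → ι, (∀ m, ν m ∈ S m) ∧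
      Tendsto (fun m ↦ ∑ l ∈ range m, φ (ν l)) atTop (𝓝 s) := by
  choose n hnS hnE using hstep
  let D : (m : ℕ) → E m := fun m ↦
    Nat.rec ⟨s - σ, hs⟩ (fun m e ↦ ⟨c m + e - φ (n m e e.2), hnE m e e.2⟩) m
  let ν : ℕ → ι := fun m ↦ n m (D m).1 (D m).2
  have hD_succ (m : ℕ) : (D (m + 1)).1 = c m + (D m).1 - φ (ν m) := rfl
  have hD_tendsto : Tendsto (fun m ↦ (D m).1) atTop (𝓝 0) := by
    refine tendsto_def.2 fun t ht ↦ ?_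
    filter_upwards [tendsto_smallSets_iff.1 hE t ht] with m hm using hm (D m).2
  have hsum (m : ℕ) : ∑ l ∈ range m, φ (ν l) = s - σ - (D m).1 + ∑ l ∈ range m, c l := by
    induction m with
    | zero => simp [D]
    | succ m ih =>
      rw [Finset.sum_range_succ, Finset.sum_range_succ, ih, hD_succ]
      abel
  refine ⟨ν, fun m ↦ hnS m _ _, ?_⟩
  simpa [hsum] using (hD_tendsto.const_sub (s - σ)).add hc

end Correction

section Blocks

variable {d : ℕ}

/-- The values at `n` of the reciprocal rising factorials `1 / (n (n + 1) ⋯ (n + j))`, `j < d`. -/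
noncomputable def risingRecip (d n : ℕ) : Fin d → ℝ := fun j ↦ 1 / n.ascFactorial ((j : ℕ) + 1)

/-- The blocks of size `N`: the `d`-tuples whose entries lie in the consecutive intervals
`[N, 2 N), [2 N, 3 N), …, [d N, (d + 1) N)`. -/
def blocks (d : ℕ) (N : ℝ) : Set (Fin d → ℕ) :=
  {n | ∀ i : Fin d, (n i : ℝ) ∈ Set.Ico (((i : ℕ) + 1) * N) (((i : ℕ) + 2) * N)}

/-- The vectors of errors which, for small `r`, a block of size `N` is able to correct. -/
def errorBox (d : ℕ) (r N : ℝ) : Set (Fin d → ℝ) := {e | ∀ j, |e j| * N ^ ((j : ℕ) + 1) ≤ r}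

theorem le_of_mem_blocks {N : ℝ} (hN : 0 ≤ N) {n : Fin d → ℕ} (hn : n ∈ blocks d N) (i : Fin d) :
    N ≤ n i :=
  (le_mul_of_one_le_left hN (by simp)).trans (hn i).1

theorem strictMono_of_mem_blocks {N : ℝ} (hN : 0 ≤ N) {n : Fin d → ℕ} (hn : n ∈ blocks d N) :
    StrictMono n := by
  intro i k hik
  have hik' : ((i : ℕ) + 1 : ℝ) ≤ (k : ℕ) := mod_cast hik
  have : (n i : ℝ) < n k := calc
    (n i : ℝ) < ((i : ℕ) + 2) * N := (hn i).2
    _ ≤ ((k : ℕ) + 1) * N := mul_le_mul_of_nonneg_right (by linarith) hN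
    _ ≤ n k := (hn k).1
  exact_mod_cast this

theorem lt_of_mem_blocks {M N : ℝ} (hM : 0 ≤ M) (hMN : (d + 1) * M ≤ N) {m n : Fin d → ℕ}
    (hm : m ∈ blocks d M) (hn : n ∈ blocks d N) (i k : Fin d) : m i < n k := by
  have hi : ((i : ℕ) + 1 : ℝ) ≤ d := mod_cast i.2
  have : (m i : ℝ) < n k := calc
    (m i : ℝ) < ((i : ℕ) + 2) * M := (hm i).2
    _ ≤ (d + 1) * M := by gcongr ?_ * _; linarith
    _ ≤ N := hMN
    _ ≤ n k := le_of_mem_blocks (hMN.trans' (by positivity)) hn k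
  exact_mod_cast this

theorem tendsto_errorBox_smallSets {r : ℝ} {N : ℕ → ℝ} (hN : Tendsto N atTop atTop) :
    Tendsto (fun m ↦ errorBox d r (N m)) atTop (𝓝 0).smallSets := by
  rw [tendsto_smallSets_iff]
  intro t ht
  obtain ⟨ε, hε, hball⟩ := Metric.mem_nhds_iff.1 ht
  filter_upwards [hN.eventually_ge_atTop 1, hN.eventually_gt_atTop (r / ε)] with m h1 hlarge e he
  refine hball (mem_ball_zero_iff.2 ((pi_norm_lt_iff hε).2 fun j ↦ ?_))
  refine lt_of_mul_lt_mul_right ?_ (zero_le_one.trans h1)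
  calc |e j| * N m ≤ |e j| * N m ^ ((j : ℕ) + 1) := by
        gcongr
        exact le_self_pow₀ h1 (Nat.succ_ne_zero _)
    _ ≤ r := he j
    _ < ε * N m := (div_lt_iff₀' hε).1 hlarge

theorem exists_rat_sub_mem_errorBox {r N : ℝ} (hr : 0 < r) (hN : 0 < N) (σ : Fin d → ℝ) :
    ∃ T : Fin d → ℚ, (fun j ↦ (T j : ℝ)) - σ ∈ errorBox d r N := by
  have hnear (j : Fin d) : ∃ t : ℚ, |σ j - t| < r / N ^ ((j : ℕ) + 1) :=
    exists_rat_near _ (by positivity)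
  choose T hT using hnear
  refine ⟨T, fun j ↦ ?_⟩
  rw [Pi.sub_apply, abs_sub_comm]
  exact ((lt_div_iff₀ (by positivity)).1 (hT j)).le

theorem floor_mul_mem_blocks {N : ℝ} (hN : 4 ≤ N) {x : Fin d → ℝ}
    (hx : ∀ i : Fin d, |x i - ((i : ℕ) + 3 / 2)| ≤ 1 / 4) : (fun i ↦ ⌊N * x i⌋₊) ∈ blocks d N := by
  intro i
  obtain ⟨hxl, hxu⟩ := abs_le.1 (hx i)
  have hx0 : 0 ≤ x i := by linarith [(i : ℕ).cast_nonneg (α := ℝ)]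
  have hlower : N * ((i : ℕ) + 5 / 4) ≤ N * x i := by gcongr; linarith
  have hupper : N * x i ≤ N * ((i : ℕ) + 7 / 4) := by gcongr; linarith
  have hfloor_le := Nat.floor_le (show 0 ≤ N * x i by positivity)
  have hlt_floor := Nat.lt_floor_add_one (N * x i)
  constructor <;> linarith

theorem abs_sub_risingRecip_floor_mul_pow_le {N x : ℝ} (hN : 0 < N) (hx : N ≤ ⌊N * x⌋₊)
    (j : Fin d) :
    |x⁻¹ ^ ((j : ℕ) + 1) / N ^ ((j : ℕ) + 1) - risingRecip d ⌊N * x⌋₊ j| * N ^ ((j : ℕ) + 2) ≤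
      (d : ℝ) ^ 2 := by
  set n := ⌊N * x⌋₊
  have hn0 : 0 < n := Nat.cast_pos.1 (hN.trans_le hx)
  have hy : N * x ∈ Set.Icc (n : ℝ) (n + ((j : ℕ) + 1 : ℕ)) := by
    have hlt_floor := Nat.lt_floor_add_one (N * x)
    refine ⟨Nat.floor_le (Nat.pos_of_floor_pos hn0).le, ?_⟩
    push_cast
    linarith [(j : ℕ).cast_nonneg (α := ℝ)]
  have hjd : (((j : ℕ) + 1 : ℕ) : ℝ) ≤ d := mod_cast j.2
  rw [← le_div_iff₀ (by positivity), abs_sub_comm, inv_pow, inv_eq_one_div, div_div, ← mul_pow,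
    mul_comm x]
  exact (abs_one_div_ascFactorial_sub_one_div_pow_le hn0 hy).trans (by gcongr)

theorem exists_blocks_correction (d : ℕ) :
    ∃ r > 0, ∃ C : ℝ, ∃ y₀ : Fin d → ℝ, ∀ N ≥ 4, ∀ e ∈ errorBox d r N, ∃ n ∈ blocks d N, ∀ j,
      |y₀ j / N ^ ((j : ℕ) + 1) + e j - ∑ i, risingRecip d (n i) j| * N ^ ((j : ℕ) + 2) ≤ C := by
  let x₀ : Fin d → ℝ := fun i ↦ (i : ℕ) + 3 / 2
  have hinj : Function.Injective x₀ := fun i k h ↦ Fin.ext (by simpa [x₀] using h)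
  have hne (i : Fin d) : x₀ i ≠ 0 := by
    simp only [x₀]
    positivity
  obtain ⟨r, hr, hball⟩ := Metric.nhds_basis_closedBall.eventually_iff.1
    (eventually_exists_powerSums_inv_eq hinj hne
      (Metric.closedBall_mem_nhds x₀ (show (0 : ℝ) < 1 / 4 by norm_num)))
  refine ⟨r, hr, d * d ^ 2, powerSums x₀⁻¹, fun N hN e he ↦ ?_⟩
  have hN0 : 0 < N := by linarith
  obtain ⟨x, hx, hxy⟩ : ∃ x ∈ Metric.closedBall x₀ (1 / 4), powerSums x⁻¹ =
      fun j ↦ powerSums x₀⁻¹ j + e j * N ^ ((j : ℕ) + 1) := by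
    refine hball ((dist_pi_le_iff hr.le).2 fun j ↦ ?_)
    rw [Real.dist_eq, add_sub_cancel_left, abs_mul, abs_of_pos (pow_pos hN0 _)]
    exact he j
  have hn : (fun i ↦ ⌊N * x i⌋₊) ∈ blocks d N :=
    floor_mul_mem_blocks hN ((dist_pi_le_iff (by norm_num)).1 hx)
  refine ⟨_, hn, fun j ↦ ?_⟩
  have htarget : powerSums x₀⁻¹ j / N ^ ((j : ℕ) + 1) + e j =
      ∑ i, (x i)⁻¹ ^ ((j : ℕ) + 1) / N ^ ((j : ℕ) + 1) := by
    rw [← Finset.sum_div, eq_div_iff (by positivity), add_mul, div_mul_cancel₀ _ (by positivity)]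
    exact (congrFun hxy j).symm
  rw [htarget, ← Finset.sum_sub_distrib]
  calc _ ≤ (∑ i, |(x i)⁻¹ ^ ((j : ℕ) + 1) / N ^ ((j : ℕ) + 1) - risingRecip d ⌊N * x i⌋₊ j|) *
        N ^ ((j : ℕ) + 2) := by
        gcongr
        exact Finset.abs_sum_le_sum_abs _ _
    _ ≤ ∑ _i : Fin d, (d : ℝ) ^ 2 := by
        rw [Finset.sum_mul]
        exact Finset.sum_le_sum fun i _ ↦
          abs_sub_risingRecip_floor_mul_pow_le hN0 (le_of_mem_blocks hN0.le hn i) j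
    _ = d * d ^ 2 := by simp

end Blocks

section Scale

variable {L q : ℝ}

/-- The doubly exponential sequence of block sizes; each term is the `q`-th power of the previous
one. -/
noncomputable def scale (L q : ℝ) (m : ℕ) : ℝ := exp (L * q ^ m)

theorem scale_pos (L q : ℝ) (m : ℕ) : 0 < scale L q m := exp_pos _

theorem pow_le_scale (hL : 1 ≤ L) (hq : 0 ≤ q) (m : ℕ) : q ^ m ≤ scale L q m := calc
  q ^ m ≤ L * q ^ m := le_mul_of_one_le_left (by positivity) hL
  _ ≤ scale L q m := (lt_add_one _).le.trans (add_one_le_exp _)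

theorem monotone_scale (hL : 0 ≤ L) (hq : 1 ≤ q) : Monotone (scale L q) := fun _ _ h ↦
  exp_le_exp.2 (mul_le_mul_of_nonneg_left (pow_le_pow_right₀ hq h) hL)

theorem tendsto_scale_atTop (hL : 1 ≤ L) (hq : 1 < q) : Tendsto (scale L q) atTop atTop :=
  tendsto_atTop_mono (pow_le_scale hL (zero_le_one.trans hq.le))
    (tendsto_pow_atTop_atTop_of_one_lt hq)

theorem summable_div_scale_pow (hL : 1 ≤ L) (hq : 1 < q) (y : ℝ) (k : ℕ) :
    Summable fun m ↦ y / scale L q m ^ (k + 1) := by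
  have hgeom : Summable fun m : ℕ ↦ |y| * q⁻¹ ^ m :=
    (summable_geometric_of_lt_one (by positivity) (inv_lt_one_of_one_lt₀ hq)).mul_left _
  refine .of_norm_bounded hgeom fun m ↦ ?_
  have hqs : q ^ m ≤ scale L q m := pow_le_scale hL (by positivity) m
  have hs : scale L q m ≤ scale L q m ^ (k + 1) :=
    le_self_pow₀ ((one_le_pow₀ hq.le).trans hqs) k.succ_ne_zero
  rw [norm_div, norm_pow, norm_of_nonneg (scale_pos L q m).le, norm_eq_abs, inv_pow,
    ← div_eq_mul_inv]
  gcongr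
  exact hqs.trans hs

theorem eventually_forall_le_exp (hq : 1 ≤ q) {δ : ℝ} (hδ : 0 < δ) (K : ℝ) :
    ∀ᶠ L in atTop, ∀ m : ℕ, ∀ t ≥ δ, K ≤ exp (L * q ^ m * t) := by
  have hexp : Tendsto (fun L ↦ exp (L * δ)) atTop atTop :=
    tendsto_exp_atTop.comp (tendsto_id.atTop_mul_const hδ)
  filter_upwards [hexp.eventually_ge_atTop K, eventually_ge_atTop 0] with L hK hL m t ht
  refine hK.trans (exp_le_exp.2 ?_)
  gcongr
  exact le_mul_of_one_le_right hL (one_le_pow₀ hq)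

theorem eventually_forall_le_scale (hq : 1 ≤ q) (K : ℝ) :
    ∀ᶠ L in atTop, ∀ m, K ≤ scale L q m := by
  filter_upwards [eventually_forall_le_exp hq one_pos K] with L hL m
  simpa [scale] using hL m 1 le_rfl

theorem eventually_forall_mul_scale_le (hq : 1 < q) (K : ℝ) :
    ∀ᶠ L in atTop, ∀ m, K * scale L q m ≤ scale L q (m + 1) := by
  filter_upwards [eventually_forall_le_exp hq.le (sub_pos.2 hq) K] with L hL m
  calc K * scale L q m ≤ exp (L * q ^ m * (q - 1)) * scale L q m :=
        mul_le_mul_of_nonneg_right (hL m _ le_rfl) (scale_pos L q m).le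
    _ = scale L q (m + 1) := by
        rw [scale, scale, ← exp_add]
        ring_nf

theorem eventually_forall_mul_scale_pow_le (hq : 1 ≤ q) {d : ℕ} (hqd : d * q < d + 1) (C : ℝ)
    {r : ℝ} (hr : 0 < r) :
    ∀ᶠ L in atTop, ∀ m, ∀ j < d,
      C * scale L q (m + 1) ^ (j + 1) ≤ r * scale L q m ^ (j + 2) := by
  filter_upwards [eventually_forall_le_exp hq (sub_pos.2 hqd) (C / r)] with L hL m j hj
  have hjd : (j + 1 : ℝ) ≤ d := mod_cast hj
  have hgap : (d + 1 : ℝ) - d * q ≤ (j + 2) - (j + 1) * q := by nlinarith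
  calc C * scale L q (m + 1) ^ (j + 1)
      ≤ r * exp (L * q ^ m * ((j + 2) - (j + 1) * q)) * scale L q (m + 1) ^ (j + 1) := by
        refine mul_le_mul_of_nonneg_right ?_ (pow_pos (scale_pos _ _ _) _).le
        exact (div_le_iff₀' hr).1 (hL m _ hgap)
    _ = r * scale L q m ^ (j + 2) := by
        rw [scale, scale, ← exp_nat_mul, ← exp_nat_mul, mul_assoc, ← exp_add]
        push_cast
        ring_nf

theorem exists_one_lt_pow_lt {x : ℝ} (hx : 1 < x) (n : ℕ) : ∃ β : ℝ, 1 < β ∧ β ^ n < x :=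
  (((continuous_pow n).tendsto' 1 1 (one_pow n)).eventually_lt_const hx).exists_gt

theorem tendsto_rpow_one_div_pow_atTop {d : ℕ} (hd : 0 < d) {β c : ℝ} (hβ : 1 ≤ β) (hc : 0 < c)
    (hβq : β ^ d < q) {a : ℕ → ℝ} (ha : ∀ k, scale c q (k / d) ≤ a k) :
    Tendsto (fun k ↦ a k ^ (1 / β ^ k)) atTop atTop := by
  have hβ0 : 0 < β := zero_lt_one.trans_le hβ
  have hq0 : 0 < q := (pow_pos hβ0 d).trans hβq
  have hlow (k : ℕ) : exp (c / β ^ d * (q / β ^ d) ^ (k / d)) ≤ a k ^ (1 / β ^ k) := by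
    have hpow : β ^ k ≤ β ^ d * (β ^ d) ^ (k / d) := by
      rw [← pow_succ', ← pow_mul]
      exact pow_le_pow_right₀ hβ (Nat.lt_mul_div_succ k hd).le
    calc exp (c / β ^ d * (q / β ^ d) ^ (k / d))
        = exp (c * q ^ (k / d) / (β ^ d * (β ^ d) ^ (k / d))) := by
          rw [div_pow, div_mul_div_comm]
      _ ≤ exp (c * q ^ (k / d) / β ^ k) := by gcongr
      _ = scale c q (k / d) ^ (1 / β ^ k) := by
          rw [scale, ← exp_mul, mul_one_div]
      _ ≤ a k ^ (1 / β ^ k) := rpow_le_rpow (scale_pos _ _ _).le (ha k) (by positivity)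
  refine tendsto_atTop_mono hlow (tendsto_exp_atTop.comp (.const_mul_atTop (by positivity) ?_))
  exact (tendsto_pow_atTop_atTop_of_one_lt ((one_lt_div (by positivity)).2 hβq)).comp
    (Nat.tendsto_div_const_atTop hd.ne')

end Scale

section Interleave

variable {d : ℕ} [NeZero d] {α : Type*}

/-- The concatenation of a sequence of blocks of length `d`. -/
def interleave (b : ℕ → Fin d → α) (k : ℕ) : α := b (k / d) (Fin.ofNat d k)

theorem strictMono_interleave [Preorder α] {b : ℕ → Fin d → α} (hb : ∀ m, StrictMono (b m))
    (hlt : ∀ ⦃m n⦄, m < n → ∀ i j, b m i < b n j) : StrictMono (interleave b) := by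
  intro k l hkl
  rcases (Nat.div_le_div_right (c := d) hkl.le).lt_or_eq with hdiv | hdiv
  · exact hlt hdiv _ _
  · have hmod : k % d < l % d := by
      have hk := Nat.div_add_mod k d
      have hl := Nat.div_add_mod l d
      rw [hdiv] at hk
      omega
    rw [interleave, interleave, hdiv]
    exact hb _ hmod

theorem hasSum_prod_of_nonneg {β γ : Type*} {f : β × γ → ℝ} (hf : 0 ≤ f) {g : β → ℝ} {s : ℝ}
    (hg : ∀ x, HasSum (fun y ↦ f (x, y)) (g x)) (hs : HasSum g s) : HasSum f s := by
  have hsummable : Summable f := (summable_prod_of_nonneg hf).2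
    ⟨fun x ↦ (hg x).summable, by simpa only [(hg _).tsum_eq] using hs.summable⟩
  exact (hsummable.hasSum.prod_fiberwise hg).unique hs ▸ hsummable.hasSum

theorem hasSum_interleave {f : α → ℝ} (hf : 0 ≤ f) {b : ℕ → Fin d → α} {s : ℝ}
    (h : HasSum (fun m ↦ ∑ i, f (b m i)) s) : HasSum (fun k ↦ f (interleave b k)) s :=
  (Nat.divModEquiv d).hasSum_iff.2 <|
    hasSum_prod_of_nonneg (f := fun p ↦ f (b p.1 p.2)) (fun _ ↦ hf _) (fun _ ↦ hasSum_fintype _) h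

end Interleave

section Construction

variable {d : ℕ} {q : ℝ}

theorem eventually_exists_tendsto_sum_risingRecip (hq : 1 < q) (hqd : d * q < d + 1) :
    ∀ᶠ L in atTop, ∃ b : ℕ → Fin d → ℕ, (∀ m, b m ∈ blocks d (scale L q m)) ∧
      ∃ T : Fin d → ℚ, Tendsto (fun m ↦ ∑ l ∈ range m, ∑ i, risingRecip d (b l i)) atTop
        (𝓝 fun j ↦ (T j : ℝ)) := by
  obtain ⟨r, hr, C, y₀, hcorr⟩ := exists_blocks_correction d
  filter_upwards [eventually_ge_atTop 1, eventually_forall_le_scale hq.le 4,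
    eventually_forall_mul_scale_pow_le hq.le hqd C hr] with L hL hge4 hpow
  have hpos := scale_pos L q
  let c : ℕ → Fin d → ℝ := fun m j ↦ y₀ j / scale L q m ^ ((j : ℕ) + 1)
  have hc : Summable c := Pi.summable.2 fun j ↦ summable_div_scale_pow hL hq (y₀ j) j
  have hstep (m : ℕ) (e : Fin d → ℝ) (he : e ∈ errorBox d r (scale L q m)) :
      ∃ n ∈ blocks d (scale L q m),
        c m + e - ∑ i, risingRecip d (n i) ∈ errorBox d r (scale L q (m + 1)) := by
    obtain ⟨n, hn, hC⟩ := hcorr _ (hge4 m) e he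
    refine ⟨n, hn, fun j ↦ le_of_mul_le_mul_right ?_ (pow_pos (hpos m) ((j : ℕ) + 2))⟩
    rw [mul_right_comm, Pi.sub_apply, Pi.add_apply, Finset.sum_apply]
    exact (mul_le_mul_of_nonneg_right (hC j) (pow_pos (hpos _) _).le).trans (hpow m j j.2)
  obtain ⟨T, hT⟩ := exists_rat_sub_mem_errorBox hr (hpos 0) (∑' m, c m)
  obtain ⟨b, hb, hlim⟩ := exists_tendsto_sum_range_of_correction
    (tendsto_errorBox_smallSets (tendsto_scale_atTop hL hq)) hstep hc.hasSum.tendsto_sum_nat hT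
  exact ⟨b, hb, T, hlim⟩

theorem hasSum_one_div_ascFactorial_interleave [NeZero d] {b : ℕ → Fin d → ℕ} {T : Fin d → ℝ}
    (h : Tendsto (fun m ↦ ∑ l ∈ range m, ∑ i, risingRecip d (b l i)) atTop (𝓝 T)) (j : Fin d) :
    HasSum (fun k ↦ (1 : ℝ) / (interleave b k).ascFactorial ((j : ℕ) + 1)) (T j) := by
  have hnonneg (n : ℕ) : 0 ≤ risingRecip d n j := by
    unfold risingRecip
    positivity
  refine hasSum_interleave (f := fun n ↦ risingRecip d n j) hnonneg ?_
  rw [hasSum_iff_tendsto_nat_of_nonneg fun m ↦ Finset.sum_nonneg fun i _ ↦ hnonneg _]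
  simpa using tendsto_pi_nhds.1 h j

end Construction

end AhmesSeries

open AhmesSeries in
theorem stmt_15_general {d : ℕ} (hd : 0 < d) {β : ℝ} (hβ : 1 < β) (hβd : β ^ d < (d + 1) / d) :
    ∃ a : ℕ → ℕ, StrictMono a ∧ (∀ k, 0 < a k) ∧
      Tendsto (fun k => (a k : ℝ) ^ ((1 : ℝ) / β ^ k)) atTop atTop ∧
      ∀ j : ℕ, j < d → ∃ q : ℚ, HasSum (fun k => (1 : ℝ) / (a k + j)) q := by
  have : NeZero d := .of_pos hd
  obtain ⟨q, hβq, hqd⟩ := exists_between hβd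
  have hq : 1 < q := (one_lt_pow₀ hβ hd.ne').trans hβq
  rw [lt_div_iff₀' (by positivity)] at hqd
  obtain ⟨L, ⟨b, hb, T, hT⟩, hL, hratio⟩ := ((eventually_exists_tendsto_sum_risingRecip hq hqd).and
    ((eventually_gt_atTop 0).and (eventually_forall_mul_scale_le hq (d + 1)))).exists
  have hscale_nonneg (m : ℕ) : 0 ≤ scale L q m := (scale_pos L q m).le
  have hscale_le (k : ℕ) : scale L q (k / d) ≤ interleave b k :=
    le_of_mem_blocks (hscale_nonneg _) (hb _) _
  have hpos (k : ℕ) : 0 < interleave b k :=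
    Nat.cast_pos.1 ((scale_pos _ _ _).trans_le (hscale_le k))
  have hmono : StrictMono (interleave b) := strictMono_interleave
    (fun m ↦ strictMono_of_mem_blocks (hscale_nonneg m) (hb m)) fun m n hmn ↦
      lt_of_mem_blocks (hscale_nonneg m) ((hratio m).trans (monotone_scale hL.le hq.le hmn))
        (hb m) (hb n)
  exact ⟨interleave b, hmono, hpos, tendsto_rpow_one_div_pow_atTop hd hβ.le hL hβq hscale_le,
    fun j hj ↦ exists_rat_hasSum_one_div_add hpos fun i hi ↦
      ⟨T ⟨i, _⟩, hasSum_one_div_ascFactorial_interleave hT ⟨i, hi.trans_lt hj⟩⟩⟩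

/-- For every `d` there exist `β > 1` and a strictly increasing sequence of
positive integers `(a_k)` with `a_k^{1/β^k} → ∞` such that all the sums
`∑_k 1/(a_k + j)`, `j = 0, …, d-1`, are rational. -/
theorem stmt_15 (d : ℕ) (hd : 0 < d) :
    ∃ β : ℝ, 1 < β ∧ ∃ a : ℕ → ℕ, StrictMono a ∧ (∀ k, 0 < a k) ∧
      Tendsto (fun k => (a k : ℝ) ^ ((1 : ℝ) / β ^ k)) atTop atTop ∧
      ∀ j : ℕ, j < d → ∃ q : ℚ, (∑' k : ℕ, (1 : ℝ) / (a k + j)) = q := by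
  have hd' : (1 : ℝ) < (d + 1) / d := (one_lt_div (by positivity)).2 (lt_add_one _)
  obtain ⟨β, hβ, hβd⟩ := AhmesSeries.exists_one_lt_pow_lt hd' d
  obtain ⟨a, hmono, hpos, hlim, hrat⟩ := stmt_15_general hd hβ hβd
  exact ⟨β, hβ, a, hmono, hpos, hlim, fun j hj ↦ (hrat j hj).imp fun _ h ↦ h.tsum_eq⟩
end

section
/- For every positive integer d, the set of points (∑_{n∈A} 1/n, ∑_{n∈A} 1/(n+1), …, ∑_{n∈A} 1/(n+d−1)) ∈ ℝ^d, taken over all infinite sets A ⊆ ℕ with ∑_{n∈A} 1/n < ∞, has non-empty interior in ℝ^d. -/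
/-!
Partial fractions turn `(1/n, …, 1/(n+d-1))` by an invertible linear map into the vector `u n`
with entries `1/(n(n+1)⋯(n+k)) ∼ n^{-(k+1)}`. After the dilation of the `k`-th coordinate by
`N^(k+1)`, a term `u ((s+1)N + r)` with bounded `r` is close to the point of the moment curve
with parameter `1/(s+1)`. For `s < d` these points form a basis, so every vector of a given
ball, translated by a fixed `p`, is within a bounded distance of a sum of boundedly many of the
dilated terms with `N ≤ n < (d+1)N`. Hence a remainder whose dilation by `N` lies in a certain
ball of centre `c` can be reduced to one whose dilation by `(d+1)N` lies in the same ball: the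
centre has to satisfy `momentCurve (d+1) * (c - p) = c`, and the error `d + 1` is magnified at
most to the radius `(d+1)^(d+1)`. Iterating over the scales `(d+1)^j N` expands every vector of
an open set.
-/

open Filter Topology Finset Function
open scoped fwdDiff

section Subsums

variable {α ι E E' : Type*}

/-- The sums of the convergent subseries of `u` over the infinite subsets of `s`. Only unconditional
convergence counts, since a subset of `α` carries no order of summation. -/
def infiniteSubsums [AddCommMonoid E] [TopologicalSpace E] (s : Set α) (u : α → E) : Set E :=
  {x | ∃ A ⊆ s, A.Infinite ∧ HasSum (fun n : A => u n) x}

lemma infiniteSubsums_eq_preimage {R : Type*} [Semiring R] [AddCommMonoid E] [TopologicalSpace E]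
    [Module R E] [AddCommMonoid E'] [TopologicalSpace E'] [Module R E'] (T : E ≃L[R] E')
    {s : Set α} {u : α → E} {v : α → E'} (h : ∀ n ∈ s, T (u n) = v n) :
    infiniteSubsums s u = T ⁻¹' infiniteSubsums s v := by
  ext x
  refine exists_congr fun A => and_congr_right fun hA => and_congr_right fun _ => ?_
  have huv : (fun n : A => T (u n)) = fun n : A => v n := funext fun n => h n (hA n.2)
  rw [← huv, T.hasSum, T.symm_apply_apply]

lemma hasSum_iUnion_of_nonneg {β : Type*} {F : β → Finset α} (hF : Pairwise (Disjoint on F))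
    {f : α → ℝ} (hf : 0 ≤ f) {x : ℝ} (h : HasSum (fun j => ∑ n ∈ F j, f n) x) :
    HasSum (fun n : ⋃ j, (F j : Set α) => f n) x := by
  have hF' : Pairwise (Disjoint on fun j => (F j : Set α)) :=
    fun i j hij => Finset.disjoint_coe.2 (hF hij)
  have hblock (j : β) : HasSum (fun n : (F j : Set α) => f n) (∑ n ∈ F j, f n) := (F j).hasSum f
  rw [← (Set.unionEqSigmaOfDisjoint hF').symm.hasSum_iff]
  simp only [comp_def, Set.coe_unionEqSigmaOfDisjoint_symm_apply]
  have hnonneg (n : Σ j, (F j : Set α)) : 0 ≤ f n.2 := hf n.2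
  refine h.sigma_of_hasSum hblock ((summable_sigma_of_nonneg hnonneg).2
    ⟨fun j => (hblock j).summable, ?_⟩)
  exact h.summable.congr fun j => (hblock j).tsum_eq.symm

/-- Greedy expansion: the remainder `x - ∑ n ∈ F 0 ∪ ⋯ ∪ F (j - 1), u n` is steered through the
sets `K j`, which shrink to `0`. -/
lemma mem_infiniteSubsums_of_greedy {s : Set α} {B : ℕ → Set α} (hB : Pairwise (Disjoint on B))
    (hBs : ∀ j, B j ⊆ s) {u : α → ι → ℝ} (hu : 0 ≤ u) {K : ℕ → Set (ι → ℝ)}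
    (hK : ∀ y : ℕ → ι → ℝ, (∀ j, y j ∈ K j) → Tendsto y atTop (𝓝 0))
    (hstep : ∀ j, ∀ y ∈ K j, ∃ F : Finset α, F.Nonempty ∧ ↑F ⊆ B j ∧ y - ∑ n ∈ F, u n ∈ K (j + 1))
    {x : ι → ℝ} (hx : x ∈ K 0) : x ∈ infiniteSubsums s u := by
  choose! Φ hne hsub hmem using hstep
  let y : ℕ → ι → ℝ := fun j => Nat.rec x (fun j y => y - ∑ n ∈ Φ j y, u n) j
  have hy (j : ℕ) : y j ∈ K j := by
    induction j with
    | zero => exact hx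
    | succ j ih => exact hmem j _ ih
  let F : ℕ → Finset α := fun j => Φ j (y j)
  have hFB (j : ℕ) : (F j : Set α) ⊆ B j := hsub j _ (hy j)
  have hF : Pairwise (Disjoint on F) :=
    fun i j hij => Finset.disjoint_coe.1 ((hB hij).mono (hFB i) (hFB j))
  have hsum (j : ℕ) : ∑ n ∈ F j, u n = y j - y (j + 1) := (sub_sub_cancel _ _).symm
  have hpartial : Tendsto (fun J => ∑ j ∈ range J, ∑ n ∈ F j, u n) atTop (𝓝 (y 0)) := by
    simpa only [hsum, sum_range_sub', sub_zero] using (hK y hy).const_sub (y 0)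
  change y 0 ∈ infiniteSubsums s u
  refine ⟨⋃ j, (F j : Set α), Set.iUnion_subset fun j => (hFB j).trans (hBs j), ?_, ?_⟩
  · refine Set.infinite_iUnion fun i j hij => by_contra fun hij' => ?_
    have : Disjoint (F i) (F i) := by
      simpa only [onFun, ← Finset.coe_injective hij] using hF hij'
    exact (hne i _ (hy i)).ne_empty (disjoint_self.1 this)
  · refine Pi.hasSum.2 fun k => hasSum_iUnion_of_nonneg hF (fun n => hu n k) ?_
    rw [hasSum_iff_tendsto_nat_of_nonneg fun j => sum_nonneg fun n _ => hu n k]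
    simpa only [Finset.sum_apply] using tendsto_pi_nhds.1 hpartial k

end Subsums

lemma exists_nat_combination_near {ι E : Type*} [Fintype ι] [NormedAddCommGroup E]
    [NormedSpace ℝ E] (b : Module.Basis ι ℝ E) (R : ℝ) :
    ∃ (p : E) (M : ι → ℕ), ∀ z : E, ‖z‖ ≤ R → ∃ m : ι → ℕ,
      (∀ i, 0 < m i) ∧ m ≤ M ∧ ‖z + p - ∑ i, m i • b i‖ ≤ ∑ i, ‖b i‖ := by
  obtain ⟨M, hM⟩ := exists_nat_gt (‖(b.equivFunL : E →L[ℝ] ι → ℝ)‖ * R + 1)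
  refine ⟨∑ i, M • b i, fun _ => 2 * M, fun z hz => ?_⟩
  have hcoord (i : ι) : |b.repr z i| + 1 < M := by
    have h₁ : |b.repr z i| ≤ ‖b.equivFunL z‖ := norm_le_pi_norm (b.equivFunL z) i
    have h₂ := (b.equivFunL : E →L[ℝ] ι → ℝ).le_opNorm_of_le hz
    exact (add_le_add_left (h₁.trans h₂) 1).trans_lt hM
  have hlower (i : ι) : 0 < ⌊b.repr z i⌋ + M := by
    have h₁ := Int.lt_floor_add_one (b.repr z i)
    have h₂ := neg_abs_le (b.repr z i)
    exact_mod_cast (by linarith [hcoord i] : (0 : ℝ) < ⌊b.repr z i⌋ + M)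
  have hupper (i : ι) : ⌊b.repr z i⌋ + M ≤ 2 * M := by
    have h₁ := Int.floor_le (b.repr z i)
    have h₂ := le_abs_self (b.repr z i)
    exact_mod_cast (by linarith [hcoord i] : (⌊b.repr z i⌋ + M : ℝ) ≤ 2 * M)
  refine ⟨fun i => (⌊b.repr z i⌋ + M).toNat, fun i => Int.pos_iff_toNat_pos.1 (hlower i),
    fun i => Int.toNat_le.2 (mod_cast hupper i), ?_⟩
  have hround : z + ∑ i, M • b i - ∑ i, (⌊b.repr z i⌋ + M).toNat • b i = ZSpan.fract b z := by
    have (i : ι) : (⌊b.repr z i⌋ + M).toNat • b i = ⌊b.repr z i⌋ • b i + M • b i := by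
      rw [← natCast_zsmul, Int.toNat_of_nonneg (hlower i).le, add_zsmul, natCast_zsmul]
    rw [ZSpan.fract_apply, ZSpan.floor]
    simp only [this, sum_add_distrib, Submodule.coe_sum, Submodule.coe_smul,
      Module.Basis.restrictScalars_apply]
    abel
  rw [hround]
  exact ZSpan.norm_fract_le b z

section MomentCurve

variable {d : ℕ}

/-- The moment curve `x ↦ (x, x², …, x^d)`. Coordinatewise multiplication by `momentCurve x` is the
anisotropic dilation of `ℝ^d` by the factor `x`. -/
def momentCurve (x : ℝ) : Fin d → ℝ := fun k => x ^ ((k : ℕ) + 1)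

lemma momentCurve_mul (x y : ℝ) :
    (momentCurve (x * y) : Fin d → ℝ) = momentCurve x * momentCurve y :=
  funext fun _ => mul_pow ..

lemma momentCurve_inv_mul_cancel {x : ℝ} (hx : x ≠ 0) :
    (momentCurve x⁻¹ * momentCurve x : Fin d → ℝ) = 1 :=
  funext fun _ => by simp [momentCurve, hx]

lemma continuous_momentCurve : Continuous (momentCurve : ℝ → Fin d → ℝ) :=
  continuous_pi fun _ => continuous_pow _

lemma norm_momentCurve_le_norm {x : ℝ} (hx : ‖x‖ ≤ 1) : ‖(momentCurve x : Fin d → ℝ)‖ ≤ ‖x‖ := by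
  refine (pi_norm_le_iff_of_nonneg (norm_nonneg x)).2 fun k => ?_
  rw [momentCurve, norm_pow]
  exact pow_le_of_le_one (norm_nonneg x) hx k.1.succ_ne_zero

lemma norm_momentCurve_le_norm_pow {x : ℝ} (hx : 1 ≤ ‖x‖) :
    ‖(momentCurve x : Fin d → ℝ)‖ ≤ ‖x‖ ^ d := by
  refine (pi_norm_le_iff_of_nonneg (by positivity)).2 fun k => ?_
  rw [momentCurve, norm_pow]
  exact pow_le_pow_right₀ hx k.2

lemma linearIndependent_momentCurve {v : Fin d → ℝ} (hinj : Injective v) (hv : ∀ s, v s ≠ 0) :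
    LinearIndependent ℝ fun s => (momentCurve (v s) : Fin d → ℝ) := by
  have hdet : (Matrix.of fun s k => v s * Matrix.vandermonde v s k).det ≠ 0 := by
    rw [Matrix.det_mul_column]
    exact mul_ne_zero (prod_ne_zero_iff.2 fun s _ => hv s)
      (Matrix.det_vandermonde_ne_zero_iff.2 hinj)
  have hrows : (fun s => momentCurve (v s)) =
      Matrix.of fun s k => v s * Matrix.vandermonde v s k :=
    funext₂ fun s k => pow_succ' (v s) k
  exact hrows ▸ Matrix.linearIndependent_rows_of_det_ne_zero hdet

lemma exists_momentCurve_mul_sub_eq {q : ℝ} (hq : 1 < q) (p : Fin d → ℝ) :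
    ∃ c : Fin d → ℝ, momentCurve q * (c - p) = c := by
  refine ⟨fun k => q ^ ((k : ℕ) + 1) * p k / (q ^ ((k : ℕ) + 1) - 1), funext fun k => ?_⟩
  have : q ^ ((k : ℕ) + 1) - 1 ≠ 0 := (sub_pos.2 (one_lt_pow₀ hq (by omega))).ne'
  simp only [momentCurve, Pi.mul_apply, Pi.sub_apply]
  field_simp
  ring

lemma sum_norm_momentCurve_inv_le (d : ℕ) :
    ∑ s : Fin d, ‖(momentCurve ((s : ℝ) + 1)⁻¹ : Fin d → ℝ)‖ ≤ d := by
  have hle (s : Fin d) : ‖(momentCurve ((s : ℝ) + 1)⁻¹ : Fin d → ℝ)‖ ≤ 1 := by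
    have : ‖((s : ℝ) + 1)⁻¹‖ ≤ 1 := by
      rw [Real.norm_of_nonneg (by positivity)]
      exact inv_le_one_of_one_le₀ (by simp)
    exact (norm_momentCurve_le_norm this).trans this
  simpa using sum_le_card_nsmul univ _ 1 fun s _ => hle s

lemma exists_nat_combination_momentCurve_near (d : ℕ) (R : ℝ) :
    ∃ (p : Fin d → ℝ) (M : Fin d → ℕ), ∀ z : Fin d → ℝ, ‖z‖ ≤ R → ∃ m : Fin d → ℕ,
      (∀ s, 0 < m s) ∧ m ≤ M ∧ ‖z + p - ∑ s, m s • momentCurve ((s : ℝ) + 1)⁻¹‖ ≤ d := by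
  have hli : LinearIndependent ℝ fun s : Fin d => (momentCurve ((s : ℝ) + 1)⁻¹ : Fin d → ℝ) :=
    linearIndependent_momentCurve (fun s t hst => Fin.ext (by simpa using hst))
      fun s => by positivity
  have hspan := hli.span_eq_top_of_card_eq_finrank' (by simp)
  obtain ⟨p, M, h⟩ := exists_nat_combination_near (Module.Basis.mk hli hspan.ge) R
  refine ⟨p, M, fun z hz => ?_⟩
  obtain ⟨m, hpos, hle, hm⟩ := h z hz
  simp only [Module.Basis.mk_apply] at hm
  exact ⟨m, hpos, hle, hm.trans (sum_norm_momentCurve_inv_le d)⟩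

/-- The preimage of the closed sup-norm ball of centre `c` and radius `R` under the dilation by `N`,
used as the set of admissible remainders at scale `N`. -/
def dilatedBall (c : Fin d → ℝ) (R : ℝ) (N : ℕ) : Set (Fin d → ℝ) :=
  {y | ‖momentCurve N * y - c‖ ≤ R}

lemma norm_le_of_mem_dilatedBall {c y : Fin d → ℝ} {R : ℝ} {N : ℕ} (hN : 0 < N)
    (hy : y ∈ dilatedBall c R N) : ‖y‖ ≤ (‖c‖ + R) / N := by
  have hN' : ‖(N : ℝ)⁻¹‖ ≤ 1 := by
    rw [norm_inv, Real.norm_natCast]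
    exact inv_le_one_of_one_le₀ (mod_cast hN)
  calc ‖y‖ = ‖momentCurve (N : ℝ)⁻¹ * (c + (momentCurve N * y - c))‖ := by
        rw [add_sub_cancel, ← mul_assoc, momentCurve_inv_mul_cancel (by positivity), one_mul]
    _ ≤ ‖(N : ℝ)⁻¹‖ * (‖c‖ + R) := by
        refine (norm_mul_le _ _).trans (mul_le_mul (norm_momentCurve_le_norm hN') ?_
          (norm_nonneg _) (norm_nonneg _))
        exact (norm_add_le _ _).trans (add_le_add_right hy _)
    _ = (‖c‖ + R) / N := by rw [norm_inv, Real.norm_natCast, inv_mul_eq_div]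

lemma nonempty_interior_dilatedBall (c : Fin d → ℝ) {R : ℝ} (hR : 0 < R) {N : ℕ} (hN : 0 < N) :
    (interior (dilatedBall c R N)).Nonempty := by
  have hcont : Continuous fun y : Fin d → ℝ => ‖momentCurve N * y - c‖ := by fun_prop
  refine ⟨momentCurve (N : ℝ)⁻¹ * c, mem_interior_iff_mem_nhds.2 ?_⟩
  refine mem_of_superset ((isOpen_lt hcont continuous_const).mem_nhds (?_ : _ < R))
    fun y (hy : _ < R) => hy.le
  rw [← mul_assoc, mul_comm (momentCurve _), momentCurve_inv_mul_cancel (by positivity), one_mul,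
    sub_self, norm_zero]
  exact hR

end MomentCurve

section Block

variable {d : ℕ}

/-- The union over `s < d` of the intervals of `m s` consecutive integers starting at `(s + 1) * N`,
from which the denominators at scale `N` are taken. -/
def block (N : ℕ) (m : Fin d → ℕ) : Finset ℕ :=
  univ.biUnion fun s : Fin d => Ico ((s + 1) * N) ((s + 1) * N + m s)

variable {N : ℕ} {m : Fin d → ℕ}

lemma block_nonempty (hd : 0 < d) (hm : ∀ s, 0 < m s) : (block N m).Nonempty :=
  biUnion_nonempty.2 ⟨⟨0, hd⟩, mem_univ _, nonempty_Ico.2 (Nat.lt_add_of_pos_right (hm _))⟩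

lemma block_subset (hm : ∀ s, m s ≤ N) : block N m ⊆ Ico N ((d + 1) * N) := by
  refine biUnion_subset.2 fun s _ => Ico_subset_Ico (Nat.le_mul_of_pos_left _ (by omega)) ?_
  calc ((s : ℕ) + 1) * N + m s ≤ (s + 1) * N + N := by gcongr; exact hm s
    _ = (s + 1 + 1) * N := by ring
    _ ≤ (d + 1) * N := by gcongr; exact s.2

lemma sum_block {M : Type*} [AddCommMonoid M] (hm : ∀ s, m s ≤ N) (f : ℕ → M) :
    ∑ n ∈ block N m, f n = ∑ s : Fin d, ∑ r ∈ range (m s), f ((s + 1) * N + r) := by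
  have hdisj : Pairwise (Disjoint on fun s : Fin d =>
      Ico (((s : ℕ) + 1) * N) ((s + 1) * N + m s)) := by
    refine (pairwise_disjoint_on _).2 fun s t hst => disjoint_left.2 fun n hs ht => ?_
    have hst' : ((s : ℕ) + 1) * N + m s ≤ (t + 1) * N := by
      calc ((s : ℕ) + 1) * N + m s ≤ (s + 1) * N + N := by gcongr; exact hm s
        _ = (s + 1 + 1) * N := by ring
        _ ≤ (t + 1) * N := by gcongr; exact hst
    exact (mem_Ico.1 hs).2.not_ge (hst'.trans (mem_Ico.1 ht).1)
  rw [block, sum_biUnion (hdisj.set_pairwise _)]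
  simp only [sum_Ico_eq_sum_range, add_tsub_cancel_left]

end Block

section GreedyStep

variable {d : ℕ} {u : ℕ → Fin d → ℝ}

lemma tendsto_momentCurve_mul_linear (hu : Tendsto (fun n : ℕ => momentCurve n * u n) atTop (𝓝 1))
    {s : ℕ} (hs : 0 < s) (r : ℕ) :
    Tendsto (fun N : ℕ => momentCurve N * u (s * N + r)) atTop (𝓝 (momentCurve (s : ℝ)⁻¹)) := by
  have hlin : Tendsto (fun N => s * N + r) atTop atTop :=
    tendsto_atTop_mono (fun N => Nat.le_add_right_of_le (Nat.le_mul_of_pos_left N hs)) tendsto_id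
  have hratio : Tendsto (fun N : ℕ => (N : ℝ) / ((s * N + r : ℕ) : ℝ)) atTop (𝓝 (s : ℝ)⁻¹) := by
    have hdenom (N : ℕ) : ((s * N + r : ℕ) : ℝ) = (N + r / s) * s := by push_cast; field_simp
    simpa only [hdenom, ← div_div, one_div] using
      (tendsto_natCast_div_add_atTop (r / s : ℝ)).div_const (s : ℝ)
  have hlim := ((continuous_momentCurve (d := d)).tendsto _).comp hratio |>.mul (hu.comp hlin)
  rw [mul_one] at hlim
  refine hlim.congr' ?_
  filter_upwards [hlin.eventually_ne_atTop 0] with N hN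
  have hN' : ((s * N + r : ℕ) : ℝ) ≠ 0 := Nat.cast_ne_zero.2 hN
  simp only [comp_apply]
  rw [← mul_assoc, ← momentCurve_mul, div_mul_cancel₀ _ hN']

lemma tendsto_momentCurve_mul_sum_block
    (hu : Tendsto (fun n : ℕ => momentCurve n * u n) atTop (𝓝 1)) (m : Fin d → ℕ) :
    Tendsto (fun N : ℕ => momentCurve N * ∑ n ∈ block N m, u n) atTop
      (𝓝 (∑ s : Fin d, m s • momentCurve ((s : ℝ) + 1)⁻¹)) := by
  have hlim : Tendsto (fun N : ℕ => ∑ s : Fin d, ∑ r ∈ range (m s),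
      momentCurve N * u (((s : ℕ) + 1) * N + r)) atTop
      (𝓝 (∑ s : Fin d, ∑ _r ∈ range (m s), momentCurve ((s : ℝ) + 1)⁻¹)) := by
    refine tendsto_finsetSum _ fun s _ => tendsto_finsetSum _ fun r _ => ?_
    simpa using tendsto_momentCurve_mul_linear hu s.1.succ_pos r
  simp only [sum_const, card_range] at hlim
  refine hlim.congr' ?_
  filter_upwards [eventually_all.2 fun s => eventually_ge_atTop (m s)] with N hN
  rw [sum_block hN, mul_sum]
  simp only [mul_sum]

lemma eventually_norm_momentCurve_mul_sum_block_sub_le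
    (hu : Tendsto (fun n : ℕ => momentCurve n * u n) atTop (𝓝 1)) (M : Fin d → ℕ) {ε : ℝ}
    (hε : 0 < ε) : ∀ᶠ N : ℕ in atTop, ∀ m ≤ M,
      ‖momentCurve N * ∑ n ∈ block N m, u n - ∑ s, m s • momentCurve ((s : ℝ) + 1)⁻¹‖ ≤ ε := by
  refine (Set.finite_Iic M).eventually_all.2 fun m _ => ?_
  have := (tendsto_momentCurve_mul_sum_block hu m).eventually (Metric.closedBall_mem_nhds _ hε)
  simpa only [Metric.mem_closedBall, dist_eq_norm] using this

lemma exists_dilatedBall_step (hd : 0 < d)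
    (hu : Tendsto (fun n : ℕ => momentCurve n * u n) atTop (𝓝 1)) :
    ∃ (c : Fin d → ℝ) (R : ℝ), 0 < R ∧ ∀ᶠ N : ℕ in atTop, ∀ y ∈ dilatedBall c R N,
      ∃ F : Finset ℕ, F.Nonempty ∧ F ⊆ Ico N ((d + 1) * N) ∧
        y - ∑ n ∈ F, u n ∈ dilatedBall c R ((d + 1) * N) := by
  set q : ℝ := d + 1
  have hd' : (0 : ℝ) < d := Nat.cast_pos.2 hd
  obtain ⟨p, M, hround⟩ := exists_nat_combination_momentCurve_near d (q ^ (d + 1))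
  obtain ⟨c, hc⟩ := exists_momentCurve_mul_sub_eq (by linarith : 1 < q) p
  refine ⟨c, q ^ (d + 1), by positivity, ?_⟩
  filter_upwards [eventually_norm_momentCurve_mul_sum_block_sub_le hu M one_pos,
    eventually_all.2 fun s => eventually_ge_atTop (M s)] with N hN hMN y hy
  obtain ⟨m, hpos, hmM, hm⟩ := hround _ hy
  refine ⟨block N m, block_nonempty hd hpos, block_subset fun s => (hmM s).trans (hMN s), ?_⟩
  set S := ∑ n ∈ block N m, u n
  set g : Fin d → ℝ := ∑ s, m s • momentCurve ((s : ℝ) + 1)⁻¹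
  set z := momentCurve N * y - c with hz
  have hself : momentCurve (((d + 1) * N : ℕ) : ℝ) * (y - S) - c
      = momentCurve q * ((z + p - g) - (momentCurve N * S - g)) := by
    rw [Nat.cast_mul, Nat.cast_succ, momentCurve_mul]
    nth_rewrite 1 [← hc]
    rw [hz]
    ring
  calc ‖momentCurve (((d + 1) * N : ℕ) : ℝ) * (y - S) - c‖
      ≤ ‖(momentCurve q : Fin d → ℝ)‖ * (‖z + p - g‖ + ‖momentCurve N * S - g‖) := by
        rw [hself]
        exact (norm_mul_le _ _).trans (by gcongr; exact norm_sub_le _ _)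
    _ ≤ q ^ d * (d + 1) := by
        have hqnorm : ‖q‖ = q := Real.norm_of_nonneg (by positivity)
        gcongr
        · simpa only [hqnorm] using
            norm_momentCurve_le_norm_pow (d := d) (by rw [hqnorm]; linarith : 1 ≤ ‖q‖)
        · exact hN m hmM
    _ = q ^ (d + 1) := (pow_succ q d).symm

theorem nonempty_interior_infiniteSubsums (hd : 0 < d) (hnonneg : 0 ≤ u)
    (hu : Tendsto (fun n : ℕ => momentCurve n * u n) atTop (𝓝 1)) (n₀ : ℕ) :
    (interior (infiniteSubsums (Set.Ici n₀) u)).Nonempty := by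
  obtain ⟨c, R, hR, hev⟩ := exists_dilatedBall_step hd hu
  obtain ⟨N₁, hN₁⟩ := eventually_atTop.1 hev
  set N₀ := max N₁ (n₀ + 1)
  have hN₀ : 0 < N₀ := by omega
  let a : ℕ → ℕ := fun j => (d + 1) ^ j * N₀
  have ha_succ (j : ℕ) : a (j + 1) = (d + 1) * a j := by simp only [a]; ring
  have ha_mono : StrictMono a :=
    (pow_right_strictMono₀ (by omega)).mul_const hN₀
  have ha_ge (j : ℕ) : N₀ ≤ a j := Nat.le_mul_of_pos_left _ (by positivity)
  refine (nonempty_interior_dilatedBall c hR hN₀).mono (interior_mono fun x hx => ?_)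
  refine mem_infiniteSubsums_of_greedy (B := fun j => Set.Ico (a j) (a (j + 1)))
    (K := fun j => dilatedBall c R (a j)) ha_mono.monotone.pairwise_disjoint_on_Ico_succ
    (fun j n hn => ?_) hnonneg (fun y hy => ?_) (fun j y hy => ?_) (by simpa [a] using hx)
  · have := ha_ge j
    exact Set.mem_Ici.2 (by have := hn.1; omega)
  · refine squeeze_zero_norm
      (fun j => norm_le_of_mem_dilatedBall (by have := ha_ge j; omega) (hy j)) ?_
    exact (tendsto_const_div_atTop_nhds_zero_nat _).comp ha_mono.tendsto_atTop
  · rw [ha_succ, ← Finset.coe_Ico]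
    simpa only [Finset.coe_subset] using hN₁ (a j) (by have := ha_ge j; omega) y hy

end GreedyStep

section Reciprocals

/-- The vector `(1/n, 1/(n+1), …, 1/(n+d-1))` summed in the theorem, with junk first entry `0` at
`n = 0`. -/
noncomputable def shiftedReciprocals (d n : ℕ) : Fin d → ℝ := fun i => 1 / ((n : ℝ) + (i : ℕ))

/-- The vector with entries `1/(n(n+1)⋯(n+k))` for `k < d`, which are of distinct orders of
magnitude `n^{-(k+1)}`. -/
noncomputable def ascFactorialReciprocals (d n : ℕ) : Fin d → ℝ :=
  fun k => (n.ascFactorial (k + 1) : ℝ)⁻¹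

lemma tendsto_pow_mul_inv_ascFactorial (k : ℕ) :
    Tendsto (fun n : ℕ => (n : ℝ) ^ k * (n.ascFactorial k : ℝ)⁻¹) atTop (𝓝 1) := by
  have hlim := tendsto_finsetProd (range k) fun i _ =>
    tendsto_natCast_div_add_atTop (𝕜 := ℝ) (i : ℝ)
  simp only [prod_const_one] at hlim
  refine hlim.congr fun n => ?_
  simp [Nat.ascFactorial_eq_prod_range, prod_div_distrib, div_eq_mul_inv (_ ^ _)]

lemma tendsto_momentCurve_mul_ascFactorialReciprocals (d : ℕ) :
    Tendsto (fun n : ℕ => momentCurve n * ascFactorialReciprocals d n) atTop (𝓝 1) :=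
  tendsto_pi_nhds.2 fun k => tendsto_pow_mul_inv_ascFactorial (k + 1)

lemma fwdDiff_iter_inv_natCast {K : Type*} [Field K] [CharZero K] (k : ℕ) {n : ℕ} (hn : 0 < n) :
    Δ_[1] ^[k] (fun n : ℕ => (n : K)⁻¹) n
      = (-1) ^ k * k.factorial * (n.ascFactorial (k + 1) : K)⁻¹ := by
  induction k generalizing n with
  | zero => simp [Nat.ascFactorial_succ]
  | succ k ih =>
    have hleft : (n : K) * ((n + 1).ascFactorial (k + 1) : K) = n.ascFactorial (k + 2) := by
      rw [Nat.ascFactorial_succ (k := k + 1), ← Nat.succ_ascFactorial, Nat.cast_mul]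
    have hright : ((n : K) + (k + 1)) * (n.ascFactorial (k + 1) : K) = n.ascFactorial (k + 2) := by
      rw [Nat.ascFactorial_succ (k := k + 1)]
      push_cast
      ring
    have hn' : (n : K) ≠ 0 := Nat.cast_ne_zero.2 hn.ne'
    have hleft' : ((n + 1).ascFactorial (k + 1) : K)⁻¹ = n * (n.ascFactorial (k + 2) : K)⁻¹ := by
      rw [← hleft, mul_inv, mul_inv_cancel_left₀ hn']
    have hright' : (n.ascFactorial (k + 1) : K)⁻¹
        = (n + (k + 1)) * (n.ascFactorial (k + 2) : K)⁻¹ := by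
      rw [← hright, mul_inv, mul_inv_cancel_left₀ (by norm_cast)]
    rw [iterate_succ_apply', fwdDiff, ih n.succ_pos, ih hn, hleft', hright', Nat.factorial_succ]
    push_cast
    ring

/-- Row `k` holds the coefficients of the partial fraction expansion of `1/(n(n+1)⋯(n+k))` in
`1/n, …, 1/(n+d-1)`. The subtraction `k - i` truncates only where the binomial coefficient
vanishes. -/
noncomputable def partialFractionMatrix (d : ℕ) : Matrix (Fin d) (Fin d) ℝ := fun k i =>
  (-1) ^ (k : ℕ) / (k : ℕ).factorial * ((-1) ^ ((k : ℕ) - i) * (k : ℕ).choose i)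

lemma isUnit_partialFractionMatrix (d : ℕ) : IsUnit (partialFractionMatrix d) := by
  have hlower : (partialFractionMatrix d).IsLowerTriangular := fun k i (hki : k < i) => by
    simp [partialFractionMatrix, Nat.choose_eq_zero_of_lt (Fin.lt_def.1 hki)]
  rw [Matrix.isUnit_iff_isUnit_det, Matrix.det_of_isLowerTriangular _ hlower, isUnit_iff_ne_zero]
  exact prod_ne_zero_iff.2 fun k _ => by simp [partialFractionMatrix, Nat.factorial_ne_zero]

lemma partialFractionMatrix_mulVec (d : ℕ) {n : ℕ} (hn : 0 < n) :
    (partialFractionMatrix d).mulVec (shiftedReciprocals d n) = ascFactorialReciprocals d n := by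
  funext k
  have hfact : ((k : ℕ).factorial : ℝ) ≠ 0 := Nat.cast_ne_zero.2 (Nat.factorial_ne_zero _)
  let term (i : ℕ) : ℝ := (-1) ^ ((k : ℕ) - i) * (k : ℕ).choose i * (1 / ((n : ℝ) + i))
  have hdiff : ∑ i : Fin d, term i = Δ_[1] ^[k] (fun n : ℕ => (n : ℝ)⁻¹) n := by
    rw [Fin.sum_univ_eq_sum_range term, fwdDiff_iter_eq_sum_shift]
    refine (sum_subset (range_mono k.2) fun i _ hi => ?_).symm.trans (sum_congr rfl fun i _ => ?_)
    · simp [term, Nat.choose_eq_zero_of_lt (by simpa using hi : (k : ℕ) < i)]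
    · simp [term]
  calc (partialFractionMatrix d).mulVec (shiftedReciprocals d n) k
      = (-1) ^ (k : ℕ) / (k : ℕ).factorial * ∑ i : Fin d, term i := by
        simp only [Matrix.mulVec, dotProduct, partialFractionMatrix, shiftedReciprocals, term,
          mul_sum, mul_assoc]
    _ = ascFactorialReciprocals d n k := by
        rw [hdiff, fwdDiff_iter_inv_natCast _ hn, ascFactorialReciprocals]
        have hsign : ((-1 : ℝ) ^ (k : ℕ)) * (-1) ^ (k : ℕ) = 1 := by
          rw [← mul_pow]; norm_num
        rw [div_mul_eq_mul_div, div_eq_iff hfact]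
        linear_combination (k : ℕ).factorial * (n.ascFactorial (k + 1) : ℝ)⁻¹ * hsign

lemma exists_continuousLinearEquiv_shiftedReciprocals (d : ℕ) :
    ∃ T : (Fin d → ℝ) ≃L[ℝ] (Fin d → ℝ),
      ∀ n > 0, T (shiftedReciprocals d n) = ascFactorialReciprocals d n :=
  ⟨((partialFractionMatrix d).toLinearEquiv'
      (isUnit_partialFractionMatrix d).invertible).toContinuousLinearEquiv,
    fun _ hn => partialFractionMatrix_mulVec d hn⟩

end Reciprocals

/-- The set of points `(∑_{n∈A} 1/n, …, ∑_{n∈A} 1/(n+d-1))`, over infinite sets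
`A` of positive integers with `∑_{n∈A} 1/n < ∞`, has nonempty interior in `ℝ^d`. -/
theorem stmt_16 (d : ℕ) (hd : 0 < d) :
    (interior {x : Fin d → ℝ | ∃ A : Set ℕ, A.Infinite ∧ (∀ n ∈ A, 0 < n) ∧
        Summable (fun n : A => (1 : ℝ) / (n : ℕ)) ∧
        ∀ i : Fin d, x i = ∑' n : A, (1 : ℝ) / ((n : ℕ) + (i : ℕ))}).Nonempty := by
  obtain ⟨T, hT⟩ := exists_continuousLinearEquiv_shiftedReciprocals d
  have hasc : (interior (infiniteSubsums (Set.Ici 1) (ascFactorialReciprocals d))).Nonempty :=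
    nonempty_interior_infiniteSubsums hd (fun n k => by simp [ascFactorialReciprocals])
      (tendsto_momentCurve_mul_ascFactorialReciprocals d) 1
  have hshift : (interior (infiniteSubsums (Set.Ici 1) (shiftedReciprocals d))).Nonempty := by
    rw [infiniteSubsums_eq_preimage (s := Set.Ici 1) T hT]
    exact (hasc.preimage T.surjective).mono (T.toHomeomorph.preimage_interior _).subset
  refine hshift.mono (interior_mono ?_)
  rintro x ⟨A, hpos, hA, hsum⟩
  have hcoord (i : Fin d) : HasSum (fun n : A => (1 : ℝ) / ((n : ℕ) + (i : ℕ))) (x i) :=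
    Pi.hasSum.1 hsum i
  exact ⟨A, hA, hpos, by simpa using (hcoord ⟨0, hd⟩).summable, fun i => (hcoord i).tsum_eq.symm⟩
end
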